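/- (Lagrange inversion for real-analytic functions.) Let J be a segment and u, g : J → ℂ real-analytic with N_R(u) < ∞, N_S(g) < ∞; set T = 2·max(R, 2S) and define L_u(g,z)(t) = Σ_{n≥0} (z^n/n!)·D^{n-1}(u^n Dg)(t) (with the n = 0 term equal to g(t)). For every t ∈ J and every complex z with |z| < 1/(4 N_R(u) T), if the number x = t + z·L_u(u,z)(t) belongs to J, then L_u(g,z)(t) = g(x); in particular (taking g = u, with |z| < 1/(16 N_R(u) R)) x satisfies the equation t + z·u(x) = x, and moreover for |z| < 1/(8 N_R(u) T) one has g(x) = g(t) + Σ_{n≥1} (z^n/n!)·D^{n-1}(u^n Dg)(t). -/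

import Mathlib

open scoped Nat BigOperators ENNReal

/-- The analytic norm `N_R(h) = sup_{p} ‖D^p h‖_J / (p! R^p)`, valued in `ℝ≥0∞`. -/
noncomputable def anorm (J : Set ℝ) (R : ℝ) (h : ℝ → ℂ) : ℝ≥0∞ :=
  ⨆ p : ℕ, (⨆ t ∈ J, (‖iteratedDerivWithin p h J t‖₊ : ℝ≥0∞)) /
    ENNReal.ofReal (p ! * R ^ p)

/-- `lag J u h n = D^{n-1}(u^n · Dh)` for `n ≥ 1`; for `n = 0` it is `h` itself. -/
noncomputable def lag (J : Set ℝ) (u h : ℝ → ℂ) : ℕ → ℝ → ℂ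
  | 0 => h
  | (n + 1) => iteratedDerivWithin n (u ^ (n + 1) * derivWithin h J) J

/-- The Lagrange series `L_u(h,z)(t) = Σ_{n≥0} (z^n/n!)·D^{n-1}(u^n Dh)(t)`. -/
noncomputable def Lser (J : Set ℝ) (u h : ℝ → ℂ) (z : ℂ) (t : ℝ) : ℂ :=
  ∑' n : ℕ, z ^ n / (n ! : ℂ) * lag J u h n t

section Formal

open PowerSeries

variable {K : Type*} [Field K]

/-- The coefficient of `z ^ n` in the Lagrange series of `G` along `U`:
`G(0)` for `n = 0`, and `[s ^ (n - 1)] (U ^ n * G') / n` for `n ≥ 1`. -/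
noncomputable def lagrangeCoeff (U : K⟦X⟧) : ℕ → K⟦X⟧ →ₗ[K] K
  | 0 => coeff 0
  | n + 1 => ((n + 1 : ℕ) : K)⁻¹ • (coeff n ∘ₗ LinearMap.mulLeft K (U ^ (n + 1)) ∘ₗ
      (derivative K).toLinearMap)

theorem lagrangeCoeff_zero (U G : K⟦X⟧) : lagrangeCoeff U 0 G = coeff 0 G := rfl

theorem lagrangeCoeff_succ (U G : K⟦X⟧) (n : ℕ) :
    lagrangeCoeff U (n + 1) G =
      ((n + 1 : ℕ) : K)⁻¹ * coeff n (U ^ (n + 1) * derivative K G) := rfl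

theorem lagrangeCoeff_X_pow_mul (U Q : K⟦X⟧) {n p : ℕ} (h : n < p) :
    lagrangeCoeff U n (X ^ p * Q) = 0 := by
  cases n with
  | zero => simp [lagrangeCoeff_zero, coeff_X_pow_mul', h.ne']
  | succ n =>
    obtain ⟨p, rfl⟩ : ∃ k, p = k + 1 := ⟨p - 1, by omega⟩
    have key : U ^ (n + 1) * derivative K (X ^ (p + 1) * Q) =
        X ^ p * (U ^ (n + 1) * (X * derivative K Q + (p + 1 : K⟦X⟧) * Q)) := by
      simp only [Derivation.leibniz, Derivation.leibniz_pow, derivative_X, smul_eq_mul,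
        nsmul_eq_mul]
      push_cast
      ring
    rw [lagrangeCoeff_succ, key, coeff_X_pow_mul', if_neg (by omega), mul_zero]

theorem lagrangeCoeff_succ_of_constantCoeff_eq_zero {U : K⟦X⟧} (hU : constantCoeff U = 0)
    (G : K⟦X⟧) (n : ℕ) : lagrangeCoeff U (n + 1) G = 0 := by
  obtain ⟨V, rfl⟩ := X_dvd_iff.2 hU
  rw [lagrangeCoeff_succ, mul_pow, mul_assoc, coeff_X_pow_mul', if_neg (by omega), mul_zero]

theorem coeff_succ_pow_succ [CharZero K] (U : K⟦X⟧) (n : ℕ) :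
    coeff (n + 1) (U ^ (n + 1)) = coeff n (U ^ n * derivative K U) := by
  have h := coeff_derivative (U ^ (n + 1)) n
  rw [Derivation.leibniz_pow, Nat.add_sub_cancel, smul_eq_mul, nsmul_eq_mul] at h
  rw [← map_natCast (C (R := K)), coeff_C_mul] at h
  have hn : ((n : K) + 1) ≠ 0 := by exact_mod_cast Nat.succ_ne_zero n
  push_cast at h
  rw [mul_comm] at h
  exact (mul_right_cancel₀ hn h).symm

theorem lagrangeCoeff_basis_pow [CharZero K] {U : K⟦X⟧} (hU : constantCoeff U ≠ 0) (n k : ℕ) :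
    lagrangeCoeff U n ((X * U⁻¹) ^ k) = if n = k then 1 else 0 := by
  have hUi : U * U⁻¹ = 1 := PowerSeries.mul_inv_cancel U hU
  cases n with
  | zero =>
    cases k with
    | zero => simp [lagrangeCoeff_zero]
    | succ k => simp [lagrangeCoeff_zero]
  | succ n =>
    cases k with
    | zero => simp [lagrangeCoeff_succ]
    | succ k =>
      have hd : derivative K ((X * U⁻¹) ^ (k + 1)) =
          ((k + 1 : ℕ) : K⟦X⟧) * ((X * U⁻¹) ^ k * (U⁻¹ - X * U⁻¹ ^ 2 * derivative K U)) := by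
        rw [Derivation.leibniz_pow, Nat.add_sub_cancel, Derivation.leibniz, derivative_inv',
          derivative_X]
        simp only [smul_eq_mul, nsmul_eq_mul]
        ring
      rw [lagrangeCoeff_succ, hd, ← map_natCast (C (R := K)), mul_left_comm, coeff_C_mul]
      rcases lt_trichotomy n k with h | rfl | h
      · have : U ^ (n + 1) * ((X * U⁻¹) ^ k * (U⁻¹ - X * U⁻¹ ^ 2 * derivative K U)) =
            X ^ k * (U ^ (n + 1) * (U⁻¹ ^ k * (U⁻¹ - X * U⁻¹ ^ 2 * derivative K U))) := by ring
        rw [this, coeff_X_pow_mul', if_neg (by omega), if_neg (by omega)]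
        simp
      · have : U ^ (n + 1) * ((X * U⁻¹) ^ n * (U⁻¹ - X * U⁻¹ ^ 2 * derivative K U)) =
            X ^ n * (1 - X * (U⁻¹ * derivative K U)) := by
          calc _ = X ^ n * ((U * U⁻¹) ^ (n + 1) * (1 - X * (U⁻¹ * derivative K U))) := by ring
            _ = _ := by rw [hUi]; ring
        have hn : ((n + 1 : ℕ) : K) ≠ 0 := by exact_mod_cast Nat.succ_ne_zero n
        rw [this, coeff_X_pow_mul']
        simpa using inv_mul_cancel₀ hn
      · obtain ⟨m, rfl⟩ : ∃ m, n = k + (m + 1) := ⟨n - k - 1, by omega⟩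
        have : U ^ (k + (m + 1) + 1) *
              ((X * U⁻¹) ^ k * (U⁻¹ - X * U⁻¹ ^ 2 * derivative K U)) =
            X ^ k * (U ^ (m + 1) - X * (U ^ m * derivative K U)) := by
          calc _ = X ^ k * ((U * U⁻¹) ^ (k + 1) * (U ^ (m + 1)) -
                (U * U⁻¹) ^ (k + 2) * (X * (U ^ m * derivative K U))) := by ring
            _ = _ := by rw [hUi]; ring
        rw [this, coeff_X_pow_mul', if_pos (by omega), if_neg (by omega), Nat.add_sub_cancel_left,
          map_sub, coeff_succ_X_mul, coeff_succ_pow_succ, sub_self, mul_zero, mul_zero]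

theorem exists_eq_sum_basis_pow_add {U : K⟦X⟧} (hU : constantCoeff U ≠ 0) (G : K⟦X⟧) (n : ℕ) :
    ∃ (c : ℕ → K) (Q : K⟦X⟧),
      G = ∑ k ∈ Finset.range n, c k • (X * U⁻¹) ^ k + X ^ n * Q := by
  have hUi : U * U⁻¹ = 1 := PowerSeries.mul_inv_cancel U hU
  induction n with
  | zero => exact ⟨0, G, by simp⟩
  | succ n ih =>
    obtain ⟨c, Q, hG⟩ := ih
    obtain ⟨Q', hQ'⟩ := X_dvd_iff.2
      (show constantCoeff (Q * U ^ n - C (constantCoeff (Q * U ^ n))) = 0 by simp)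
    refine ⟨Function.update c n (constantCoeff (Q * U ^ n)), Q' * U⁻¹ ^ n, ?_⟩
    rw [Finset.sum_range_succ, Function.update_self, Finset.sum_congr rfl (g := fun k ↦
      c k • (X * U⁻¹) ^ k) fun k hk ↦ by
        rw [Function.update_of_ne (Finset.mem_range.1 hk).ne], add_assoc]
    conv_lhs => rw [hG]
    congr 1
    rw [smul_eq_C_mul]
    calc X ^ n * Q = X ^ n * ((U * U⁻¹) ^ n * Q) := by rw [hUi]; ring
      _ = C (constantCoeff (Q * U ^ n)) * (X * U⁻¹) ^ n +
          X ^ n * (Q * U ^ n - C (constantCoeff (Q * U ^ n))) * U⁻¹ ^ n := by ring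
      _ = _ := by rw [hQ']; ring

theorem exists_eq_sum_lagrangeCoeff_add [CharZero K] {U : K⟦X⟧} (hU : constantCoeff U ≠ 0)
    (G : K⟦X⟧) (n : ℕ) :
    ∃ Q : K⟦X⟧, G = ∑ k ∈ Finset.range n, lagrangeCoeff U k G • (X * U⁻¹) ^ k + X ^ n * Q := by
  obtain ⟨c, Q, hG⟩ := exists_eq_sum_basis_pow_add hU G n
  refine ⟨Q, ?_⟩
  have hc : ∀ k ∈ Finset.range n, lagrangeCoeff U k G = c k := fun k hk ↦ by
    conv_lhs => rw [hG]
    rw [map_add, map_sum, lagrangeCoeff_X_pow_mul U Q (Finset.mem_range.1 hk), add_zero]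
    simp only [map_smul, lagrangeCoeff_basis_pow hU, smul_eq_mul, mul_ite, mul_one, mul_zero]
    rw [Finset.sum_ite_eq, if_pos hk]
  rw [Finset.sum_congr rfl fun k hk ↦ by rw [hc k hk]]
  exact hG

/-- The Lagrange series depends multiplicatively on `G`. -/
theorem lagrangeCoeff_mul [CharZero K] (U G H : K⟦X⟧) (n : ℕ) :
    lagrangeCoeff U n (G * H) =
      ∑ ij ∈ Finset.HasAntidiagonal.antidiagonal n, lagrangeCoeff U ij.1 G * lagrangeCoeff U ij.2 H := by
  by_cases hU : constantCoeff U = 0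
  · cases n with
    | zero => simp [lagrangeCoeff_zero]
    | succ n =>
      rw [lagrangeCoeff_succ_of_constantCoeff_eq_zero hU, Finset.sum_eq_zero]
      rintro ⟨i, j⟩ hij
      rw [Finset.HasAntidiagonal.mem_antidiagonal] at hij
      cases i with
      | zero =>
        obtain rfl : j = n + 1 := by simpa using hij
        simp [lagrangeCoeff_succ_of_constantCoeff_eq_zero hU]
      | succ i => simp [lagrangeCoeff_succ_of_constantCoeff_eq_zero hU]
  · obtain ⟨P, hP⟩ := exists_eq_sum_lagrangeCoeff_add hU G (n + 1)
    obtain ⟨Q, hQ⟩ := exists_eq_sum_lagrangeCoeff_add hU H (n + 1)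
    set A := ∑ k ∈ Finset.range (n + 1), lagrangeCoeff U k G • (X * U⁻¹) ^ k with hA
    set B := ∑ k ∈ Finset.range (n + 1), lagrangeCoeff U k H • (X * U⁻¹) ^ k with hB
    have hGH : G * H = A * B + X ^ (n + 1) * (A * Q + P * H) := by
      calc G * H = A * H + X ^ (n + 1) * (P * H) := by
            conv_lhs => rw [hP]
            ring
        _ = A * (B + X ^ (n + 1) * Q) + X ^ (n + 1) * (P * H) := by rw [← hQ]
        _ = _ := by ring
    rw [hGH, map_add, lagrangeCoeff_X_pow_mul U _ n.lt_succ_self, add_zero, hA, hB,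
      Finset.sum_mul_sum, map_sum]
    simp only [map_sum, smul_mul_smul_comm, ← pow_add, map_smul, lagrangeCoeff_basis_pow hU,
      smul_eq_mul, mul_ite, mul_one, mul_zero]
    rw [← Finset.sum_product', ← Finset.sum_filter]
    refine Finset.sum_congr ?_ fun _ _ ↦ rfl
    ext ⟨i, j⟩
    simp only [Finset.mem_filter, Finset.mem_product, Finset.mem_range, Finset.HasAntidiagonal.mem_antidiagonal]
    omega

theorem lagrangeCoeff_eq_sum (U G : K⟦X⟧) (n : ℕ) :
    lagrangeCoeff U n G =
      ∑ p ∈ Finset.range (n + 1), coeff p G * lagrangeCoeff U n (X ^ p) := by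
  obtain ⟨Q, hQ⟩ : X ^ (n + 1) ∣ G - ∑ p ∈ Finset.range (n + 1), coeff p G • X ^ p := by
    rw [X_pow_dvd_iff]
    intro m hm
    simp only [map_sub, map_sum, map_smul, coeff_X_pow, smul_eq_mul, mul_ite, mul_one, mul_zero]
    rw [Finset.sum_ite_eq, if_pos (Finset.mem_range.2 hm), sub_self]
  conv_lhs => rw [eq_add_of_sub_eq hQ]
  rw [map_add, lagrangeCoeff_X_pow_mul U _ n.lt_succ_self, zero_add, map_sum]
  simp only [map_smul, smul_eq_mul]

theorem lagrangeCoeff_X_succ [CharZero K] (U : K⟦X⟧) (n : ℕ) :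
    lagrangeCoeff U (n + 1) X = lagrangeCoeff U n U := by
  cases n with
  | zero => simp [lagrangeCoeff_zero, lagrangeCoeff_succ]
  | succ n =>
    rw [lagrangeCoeff_succ, lagrangeCoeff_succ, derivative_X, mul_one]
    have h := coeff_derivative (U ^ (n + 2)) n
    rw [Derivation.leibniz_pow, smul_eq_mul, nsmul_eq_mul, ← map_natCast (C (R := K)),
      coeff_C_mul] at h
    have h1 : ((n : K) + 1) ≠ 0 := by exact_mod_cast Nat.succ_ne_zero n
    have h2 : ((n : K) + 1 + 1) ≠ 0 := by exact_mod_cast Nat.succ_ne_zero (n + 1)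
    push_cast at h ⊢
    rw [inv_mul_eq_iff_eq_mul₀ h2, mul_left_comm, eq_inv_mul_iff_mul_eq₀ h1]
    linear_combination -h

theorem lagrangeCoeff_succ_X_pow_succ (U : K⟦X⟧) {n p : ℕ} (h : p ≤ n) :
    lagrangeCoeff U (n + 1) (X ^ (p + 1)) =
      ((n + 1 : ℕ) : K)⁻¹ * (((p + 1 : ℕ) : K) * coeff (n - p) (U ^ (n + 1))) := by
  rw [lagrangeCoeff_succ, Derivation.leibniz_pow, Nat.add_sub_cancel, derivative_X, smul_eq_mul,
    mul_one, nsmul_eq_mul, mul_left_comm, ← map_natCast (C (R := K)), coeff_C_mul,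
    coeff_mul_X_pow', if_pos h]

end Formal

section Convergence

open PowerSeries

variable {U G : ℂ⟦X⟧} {N M R S T : ℝ} {z : ℂ}

theorem norm_coeff_pow_le (hU : ∀ p, ‖coeff p U‖ ≤ N * R ^ p) (n m : ℕ) :
    ‖coeff m (U ^ n)‖ ≤ N ^ n * R ^ m * coeff m ((mk 1 : ℝ⟦X⟧) ^ n) := by
  have hN : 0 ≤ N := by simpa using (norm_nonneg _).trans (hU 0)
  induction n generalizing m with
  | zero =>
    simp only [pow_zero, coeff_one]
    split_ifs with h <;> simp [h]
  | succ n ih =>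
    rw [pow_succ, pow_succ (mk 1), coeff_mul, coeff_mul, Finset.mul_sum]
    refine (norm_sum_le _ _).trans (Finset.sum_le_sum fun ij hij ↦ ?_)
    rw [Finset.HasAntidiagonal.mem_antidiagonal] at hij
    rw [norm_mul]
    calc _ ≤ N ^ n * R ^ ij.1 * coeff ij.1 ((mk 1 : ℝ⟦X⟧) ^ n) * (N * R ^ ij.2) :=
          mul_le_mul (ih _) (hU _) (norm_nonneg _) ((norm_nonneg _).trans (ih _))
      _ = _ := by
          rw [← hij, coeff_mk, Pi.one_apply]
          ring

theorem norm_lagrangeCoeff_X_pow_le (hU : ∀ p, ‖coeff p U‖ ≤ N * R ^ p) (hR : 0 ≤ R)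
    {n p : ℕ} (h : p ≤ n) :
    ‖lagrangeCoeff U n (X ^ p)‖ ≤ (4 * N) ^ n * R ^ (n - p) * (1 / 2) ^ p := by
  have hN : 0 ≤ N := by simpa using (norm_nonneg _).trans (hU 0)
  cases n with
  | zero =>
    obtain rfl : p = 0 := by omega
    simp [lagrangeCoeff_zero]
  | succ n =>
    cases p with
    | zero =>
      simp only [pow_zero, lagrangeCoeff_succ, Derivation.map_one_eq_zero, mul_zero, map_zero,
        norm_zero]
      positivity
    | succ p =>
      have hp : p ≤ n := by omega
      rw [lagrangeCoeff_succ_X_pow_succ U hp, ← mul_assoc, norm_mul, Nat.add_sub_add_right]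
      have h1 : ‖((n + 1 : ℕ) : ℂ)⁻¹ * ((p + 1 : ℕ) : ℂ)‖ ≤ 1 := by
        rw [norm_mul, norm_inv, Complex.norm_natCast, Complex.norm_natCast, inv_mul_le_iff₀
          (by positivity), mul_one]
        exact_mod_cast h
      have h2 : coeff (n - p) ((mk 1 : ℝ⟦X⟧) ^ (n + 1)) ≤ 4 ^ (n + 1) * (1 / 2) ^ (p + 1) := by
        rw [mk_one_pow_eq_mk_choose_add, coeff_mk]
        calc (((n + (n - p)).choose n : ℕ) : ℝ) ≤ 2 ^ (n + (n - p)) := by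
              exact_mod_cast Nat.choose_le_two_pow _ _
          _ ≤ 2 ^ (2 * n - p + 1) := pow_le_pow_right₀ (by norm_num) (by omega)
          _ = 2 ^ (2 * n - p + 1) * (2 ^ (p + 1) * (1 / 2) ^ (p + 1)) := by
              rw [← mul_pow]; norm_num
          _ = 4 ^ (n + 1) * (1 / 2) ^ (p + 1) := by
              rw [← mul_assoc, ← pow_add, show (4 : ℝ) = 2 ^ 2 by norm_num, ← pow_mul]
              congr 2
              omega
      calc _ ≤ 1 * (N ^ (n + 1) * R ^ (n - p) * coeff (n - p) ((mk 1 : ℝ⟦X⟧) ^ (n + 1))) :=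
            mul_le_mul h1 (norm_coeff_pow_le hU _ _) (norm_nonneg _) zero_le_one
        _ ≤ N ^ (n + 1) * R ^ (n - p) * (4 ^ (n + 1) * (1 / 2) ^ (p + 1)) := by
            rw [one_mul]; gcongr
        _ = _ := by rw [mul_pow]; ring

theorem norm_lagrangeTerm_X_pow_le (hU : ∀ p, ‖coeff p U‖ ≤ N * R ^ p) (hR : 0 ≤ R)
    (hRT : 2 * R ≤ T) (hT : 0 < T) (hz : 4 * N * ‖z‖ * T ≤ 1) (n p : ℕ) :
    ‖z ^ n * lagrangeCoeff U n (X ^ p)‖ ≤ (1 / 2) ^ n * (1 / T) ^ p := by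
  have hN : 0 ≤ N := by simpa using (norm_nonneg _).trans (hU 0)
  rcases le_or_gt p n with h | h
  · rw [norm_mul, norm_pow]
    calc _ ≤ ‖z‖ ^ n * ((4 * N) ^ n * (T / 2) ^ (n - p) * (1 / 2) ^ p) := by
          gcongr
          refine (norm_lagrangeCoeff_X_pow_le hU hR h).trans ?_
          gcongr
          linarith
      _ = (4 * N * ‖z‖ * T) ^ n * ((1 / 2) ^ n * (1 / T) ^ p) := by
          obtain ⟨k, rfl⟩ := Nat.exists_eq_add_of_le h
          rw [Nat.add_sub_cancel_left]
          simp only [mul_pow, div_pow, pow_add, one_pow]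
          field_simp
      _ ≤ 1 * ((1 / 2) ^ n * (1 / T) ^ p) := by
          gcongr
          exact pow_le_one₀ (by positivity) hz
      _ = _ := one_mul _
  · rw [← mul_one (X ^ p), lagrangeCoeff_X_pow_mul U 1 h, mul_zero, norm_zero]
    positivity

theorem hasSum_lagrangeTerm_X_pow (hU : ∀ p, ‖coeff p U‖ ≤ N * R ^ p) (hR : 0 ≤ R)
    (hRT : 2 * R ≤ T) (hT : 0 < T) (hz : 4 * N * ‖z‖ * T ≤ 1) (p : ℕ) :
    HasSum (fun n ↦ z ^ n * lagrangeCoeff U n (X ^ p))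
      ((∑' n, z ^ n * lagrangeCoeff U n X) ^ p) := by
  have hs (p : ℕ) : Summable fun n ↦ ‖z ^ n * lagrangeCoeff U n (X ^ p)‖ :=
    .of_nonneg_of_le (fun _ ↦ norm_nonneg _)
      (fun n ↦ norm_lagrangeTerm_X_pow_le hU hR hRT hT hz n p)
      (summable_geometric_two.mul_right _)
  suffices (∑' n, z ^ n * lagrangeCoeff U n X) ^ p =
      ∑' n, z ^ n * lagrangeCoeff U n (X ^ p) from this ▸ (hs p).of_norm.hasSum
  induction p with
  | zero =>
    rw [pow_zero, tsum_eq_single 0]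
    · simp [lagrangeCoeff_zero]
    · rintro (_ | n) hn
      · exact absurd rfl hn
      · simp [lagrangeCoeff_succ]
  | succ p ih =>
    have h1 := hs 1
    rw [pow_one] at h1
    rw [pow_succ, ih, tsum_mul_tsum_eq_tsum_sum_antidiagonal_of_summable_norm (hs p) h1]
    refine tsum_congr fun n ↦ ?_
    rw [pow_succ X, lagrangeCoeff_mul, Finset.mul_sum]
    refine Finset.sum_congr rfl fun ij hij ↦ ?_
    rw [Finset.HasAntidiagonal.mem_antidiagonal] at hij
    rw [← hij]
    ring

theorem norm_tsum_lagrangeTerm_X_le (hU : ∀ p, ‖coeff p U‖ ≤ N * R ^ p) (hR : 0 ≤ R)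
    (hRT : 2 * R ≤ T) (hT : 0 < T) (hz : 4 * N * ‖z‖ * T ≤ 1) :
    ‖∑' n, z ^ n * lagrangeCoeff U n X‖ ≤ 2 / T := by
  refine tsum_of_norm_bounded (hasSum_geometric_two.mul_right (1 / T)) (fun n ↦ ?_) |>.trans_eq
    (by ring)
  simpa using norm_lagrangeTerm_X_pow_le hU hR hRT hT hz n 1

theorem hasSum_tsum_of_summable_prod {F : ℕ → ℕ → ℂ} (hF : Summable fun x : ℕ × ℕ ↦ F x.1 x.2)
    {a b : ℕ → ℂ} (ha : ∀ p, HasSum (fun n ↦ F p n) (a p))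
    (hb : ∀ n, HasSum (fun p ↦ F p n) (b n)) : HasSum b (∑' p, a p) := by
  have h := hF.hasSum.prod_fiberwise ha
  have hswap : HasSum (fun x : ℕ × ℕ ↦ F x.2 x.1) (∑' x : ℕ × ℕ, F x.1 x.2) :=
    (Equiv.prodComm ℕ ℕ).hasSum_iff.2 hF.hasSum
  rw [h.tsum_eq]
  exact hswap.prod_fiberwise hb

theorem summable_of_norm_le_geometric_prod {F : ℕ → ℕ → ℂ}
    (hF : ∀ p n, ‖F p n‖ ≤ M * ((1 / 4) ^ p * (1 / 2) ^ n)) :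
    Summable fun x : ℕ × ℕ ↦ F x.1 x.2 := by
  have h4 : Summable fun p : ℕ ↦ (1 / 4 : ℝ) ^ p :=
    summable_geometric_of_lt_one (by norm_num) (by norm_num)
  exact .of_norm_bounded ((h4.mul_of_nonneg summable_geometric_two
    (fun _ ↦ by positivity) (fun _ ↦ by positivity)).mul_left M) fun x ↦ hF x.1 x.2

theorem hasSum_coeff_mul_lagrangeTerm_X_pow (U G : ℂ⟦X⟧) (z : ℂ) (n : ℕ) :
    HasSum (fun p ↦ coeff p G * (z ^ n * lagrangeCoeff U n (X ^ p)))
      (z ^ n * lagrangeCoeff U n G) := by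
  rw [lagrangeCoeff_eq_sum, Finset.mul_sum]
  simp only [mul_left_comm (z ^ n)]
  refine hasSum_sum_of_ne_finset_zero fun p hp ↦ ?_
  have hp : n < p := by simpa only [Finset.mem_range, not_lt, Nat.add_one_le_iff] using hp
  rw [← mul_one (X ^ p), lagrangeCoeff_X_pow_mul U 1 hp, mul_zero, mul_zero]

/-- Formal Lagrange inversion, evaluated inside the region of absolute convergence. -/
theorem hasSum_lagrangeTerm (hU : ∀ p, ‖coeff p U‖ ≤ N * R ^ p) (hR : 0 ≤ R)
    (hG : ∀ p, ‖coeff p G‖ ≤ M * S ^ p) (hS : 0 ≤ S)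
    (hRT : 2 * R ≤ T) (hST : 4 * S ≤ T) (hT : 0 < T) (hz : 4 * N * ‖z‖ * T ≤ 1) :
    HasSum (fun n ↦ z ^ n * lagrangeCoeff U n G)
      (∑' p, coeff p G * (∑' n, z ^ n * lagrangeCoeff U n X) ^ p) := by
  have hM : 0 ≤ M := by simpa using (norm_nonneg _).trans (hG 0)
  have hS4 : S * (1 / T) ≤ 1 / 4 := by
    rw [mul_one_div, div_le_iff₀ hT]
    linarith
  have hle (p n : ℕ) : ‖coeff p G * (z ^ n * lagrangeCoeff U n (X ^ p))‖ ≤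
      M * ((1 / 4) ^ p * (1 / 2) ^ n) := by
    calc ‖coeff p G * (z ^ n * lagrangeCoeff U n (X ^ p))‖
        ≤ M * S ^ p * ((1 / 2) ^ n * (1 / T) ^ p) := by
          rw [norm_mul]
          exact mul_le_mul (hG _) (norm_lagrangeTerm_X_pow_le hU hR hRT hT hz _ _)
            (norm_nonneg _) (by positivity)
      _ = M * ((S * (1 / T)) ^ p * (1 / 2) ^ n) := by rw [mul_pow]; ring
      _ ≤ M * ((1 / 4) ^ p * (1 / 2) ^ n) := by gcongr
  have hsum (p : ℕ) : HasSum (fun n ↦ coeff p G * (z ^ n * lagrangeCoeff U n (X ^ p)))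
      (coeff p G * (∑' n, z ^ n * lagrangeCoeff U n X) ^ p) :=
    (hasSum_lagrangeTerm_X_pow hU hR hRT hT hz p).mul_left _
  exact hasSum_tsum_of_summable_prod
    (F := fun p n ↦ coeff p G * (z ^ n * lagrangeCoeff U n (X ^ p)))
    (summable_of_norm_le_geometric_prod hle) hsum (hasSum_coeff_mul_lagrangeTerm_X_pow U G z)

end Convergence

section Taylor

open PowerSeries

variable {J : Set ℝ} {R S T a b t x : ℝ} {u g h : ℝ → ℂ} {z : ℂ}

theorem norm_iteratedDerivWithin_le_anorm (hR : 0 < R) (hN : anorm J R h ≠ ⊤) (ht : t ∈ J)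
    (p : ℕ) : ‖iteratedDerivWithin p h J t‖ ≤ (anorm J R h).toReal * (p ! * R ^ p) := by
  have hpos : 0 < (p ! : ℝ) * R ^ p := by positivity
  have h1 : (‖iteratedDerivWithin p h J t‖₊ : ℝ≥0∞) / ENNReal.ofReal (p ! * R ^ p) ≤
      anorm J R h :=
    (ENNReal.div_le_div_right (le_iSup₂ (f := fun t (_ : t ∈ J) ↦
      (‖iteratedDerivWithin p h J t‖₊ : ℝ≥0∞)) t ht) _).trans
      (le_iSup (fun p : ℕ ↦ (⨆ t ∈ J, (‖iteratedDerivWithin p h J t‖₊ : ℝ≥0∞)) /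
        ENNReal.ofReal (p ! * R ^ p)) p)
  rw [ENNReal.div_le_iff (ENNReal.ofReal_pos.2 hpos).ne' ENNReal.ofReal_ne_top] at h1
  have h2 := ENNReal.toReal_mono (ENNReal.mul_ne_top hN ENNReal.ofReal_ne_top) h1
  rwa [ENNReal.toReal_mul, ENNReal.toReal_ofReal hpos.le, ENNReal.coe_toReal, coe_nnnorm] at h2

/-- The Taylor series at `t` of a function on `J`, as a formal power series. -/
noncomputable def taylorPowerSeries (J : Set ℝ) (t : ℝ) (h : ℝ → ℂ) : ℂ⟦X⟧ :=
  mk fun p ↦ iteratedDerivWithin p h J t / p !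

theorem coeff_taylorPowerSeries (p : ℕ) :
    coeff p (taylorPowerSeries J t h) = iteratedDerivWithin p h J t / p ! :=
  coeff_mk _ _

theorem norm_coeff_taylorPowerSeries_le (hR : 0 < R) (hN : anorm J R h ≠ ⊤) (ht : t ∈ J)
    (p : ℕ) : ‖coeff p (taylorPowerSeries J t h)‖ ≤ (anorm J R h).toReal * R ^ p := by
  rw [coeff_taylorPowerSeries, norm_div, Complex.norm_natCast, div_le_iff₀ (by positivity)]
  refine (norm_iteratedDerivWithin_le_anorm hR hN ht p).trans_eq ?_
  ring

theorem taylorPowerSeries_mul (hJ : UniqueDiffOn ℝ J) (ht : t ∈ J)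
    (hg : ContDiffOn ℝ (⊤ : ℕ∞) g J) (hh : ContDiffOn ℝ (⊤ : ℕ∞) h J) :
    taylorPowerSeries J t (g * h) = taylorPowerSeries J t g * taylorPowerSeries J t h := by
  ext n
  have hle : ((n : ℕ) : WithTop ℕ∞) ≤ ((⊤ : ℕ∞) : WithTop ℕ∞) := by exact_mod_cast le_top
  rw [coeff_mul, coeff_taylorPowerSeries,
    iteratedDerivWithin_mul ht hJ ((hg t ht).of_le hle) ((hh t ht).of_le hle),
    Finset.Nat.sum_antidiagonal_eq_sum_range_succ_mk, Finset.sum_div]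
  refine Finset.sum_congr rfl fun i hi ↦ ?_
  have hi : i ≤ n := Nat.lt_succ_iff.1 (Finset.mem_range.1 hi)
  rw [coeff_taylorPowerSeries, coeff_taylorPowerSeries, Nat.cast_choose ℂ hi]
  have h0 (m : ℕ) : (m ! : ℂ) ≠ 0 := by exact_mod_cast m.factorial_ne_zero
  have := h0 n
  have := h0 i
  have := h0 (n - i)
  field_simp

theorem taylorPowerSeries_one : taylorPowerSeries J t 1 = 1 := by
  ext n
  rw [coeff_taylorPowerSeries, coeff_one]
  have : (1 : ℝ → ℂ) = fun _ ↦ 1 := rfl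
  rw [this, iteratedDerivWithin_const]
  split_ifs with h <;> simp [h]

theorem taylorPowerSeries_pow (hJ : UniqueDiffOn ℝ J) (ht : t ∈ J)
    (hh : ContDiffOn ℝ (⊤ : ℕ∞) h J) (n : ℕ) :
    taylorPowerSeries J t (h ^ n) = taylorPowerSeries J t h ^ n := by
  induction n with
  | zero => simp [taylorPowerSeries_one]
  | succ n ih => rw [pow_succ, pow_succ, taylorPowerSeries_mul (g := h ^ n) hJ ht (hh.pow n) hh, ih]

theorem taylorPowerSeries_derivWithin :
    taylorPowerSeries J t (derivWithin h J) = derivative ℂ (taylorPowerSeries J t h) := by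
  ext n
  rw [coeff_derivative, coeff_taylorPowerSeries, coeff_taylorPowerSeries,
    iteratedDerivWithin_succ', Nat.factorial_succ]
  have h0 : (n ! : ℂ) ≠ 0 := by exact_mod_cast n.factorial_ne_zero
  have h1 : (n : ℂ) + 1 ≠ 0 := by exact_mod_cast n.succ_ne_zero
  push_cast
  field_simp

theorem lag_div_factorial (hJ : UniqueDiffOn ℝ J) (ht : t ∈ J)
    (hu : ContDiffOn ℝ (⊤ : ℕ∞) u J) (hg : ContDiffOn ℝ (⊤ : ℕ∞) g J) (z : ℂ) (n : ℕ) :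
    z ^ n / (n ! : ℂ) * lag J u g n t =
      z ^ n * lagrangeCoeff (taylorPowerSeries J t u) n (taylorPowerSeries J t g) := by
  cases n with
  | zero => simp [lag, lagrangeCoeff_zero, taylorPowerSeries]
  | succ n =>
    have hg' : ContDiffOn ℝ (⊤ : ℕ∞) (derivWithin g J) J := hg.derivWithin hJ (by simp)
    have h0 : (n ! : ℂ) ≠ 0 := by exact_mod_cast n.factorial_ne_zero
    have h1 : (n : ℂ) + 1 ≠ 0 := by exact_mod_cast n.succ_ne_zero
    rw [lagrangeCoeff_succ, ← taylorPowerSeries_pow hJ ht hu, ← taylorPowerSeries_derivWithin,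
      ← taylorPowerSeries_mul (g := u ^ (n + 1)) hJ ht (hu.pow _) hg', coeff_taylorPowerSeries, lag,
      Nat.factorial_succ]
    push_cast
    field_simp

theorem norm_sub_taylorWithinEval_le (hab : a < b) (hh : ContDiffOn ℝ (⊤ : ℕ∞) h (Set.Icc a b))
    (hS : 0 < S) (hN : anorm (Set.Icc a b) S h ≠ ⊤) (ht : t ∈ Set.Icc a b)
    (hx : x ∈ Set.Icc a b) (n : ℕ) :
    ‖h x - taylorWithinEval h n (Set.Icc a b) t x‖ ≤
      (anorm (Set.Icc a b) S h).toReal * ((n + 1 : ℕ) * (S * |x - t|) ^ (n + 1)) := by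
  set N := (anorm (Set.Icc a b) S h).toReal
  have hsub : Set.uIcc t x ⊆ Set.Icc a b := Set.uIcc_subset_Icc ht hx
  have hJ := uniqueDiffOn_Icc hab
  have hle : (n : WithTop ℕ∞) ≤ ((⊤ : ℕ∞) : WithTop ℕ∞) := by exact_mod_cast le_top
  have hd : DifferentiableOn ℝ (iteratedDerivWithin n h (Set.Icc a b)) (Set.Icc a b) :=
    hh.differentiableOn_iteratedDerivWithin (by exact_mod_cast WithTop.coe_lt_top n) hJ
  have hbound : ∀ y ∈ Set.uIcc t x,
      ‖((n ! : ℝ)⁻¹ * (x - y) ^ n) • iteratedDerivWithin (n + 1) h (Set.Icc a b) y‖ ≤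
        (n ! : ℝ)⁻¹ * |x - t| ^ n * (N * ((n + 1)! * S ^ (n + 1))) := fun y hy ↦ by
    rw [norm_smul, norm_mul, norm_pow, norm_inv, Real.norm_natCast, Real.norm_eq_abs]
    have hxy : |x - y| ≤ |x - t| := by
      rw [Set.uIcc_comm] at hy
      rw [abs_sub_comm x y, abs_sub_comm x t]
      exact Set.abs_sub_left_of_mem_uIcc hy
    gcongr
    exact norm_iteratedDerivWithin_le_anorm hS hN (hsub hy) (n + 1)
  have key := (convex_uIcc t x).norm_image_sub_le_of_norm_hasDerivWithin_le
    (fun y hy ↦ (hasDerivWithinAt_taylorWithinEval_at_Icc x hab (hsub hy)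
      (hh.of_le hle) hd).mono hsub) hbound Set.left_mem_uIcc Set.right_mem_uIcc
  rw [taylorWithinEval_self, Real.norm_eq_abs] at key
  refine key.trans_eq ?_
  have h0 : (n ! : ℝ) ≠ 0 := by positivity
  rw [Nat.factorial_succ]
  push_cast
  field_simp
  ring

theorem tsum_coeff_taylorPowerSeries (hab : a < b)
    (hh : ContDiffOn ℝ (⊤ : ℕ∞) h (Set.Icc a b)) (hS : 0 < S)
    (hN : anorm (Set.Icc a b) S h ≠ ⊤) (ht : t ∈ Set.Icc a b) (hx : x ∈ Set.Icc a b)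
    (hxt : S * |x - t| < 1) :
    ∑' p, coeff p (taylorPowerSeries (Set.Icc a b) t h) * ((x : ℂ) - t) ^ p = h x := by
  have hq0 : 0 ≤ S * |x - t| := by positivity
  have hsum : Summable fun p ↦
      coeff p (taylorPowerSeries (Set.Icc a b) t h) * ((x : ℂ) - t) ^ p := by
    refine .of_norm_bounded ((summable_geometric_of_lt_one hq0 hxt).mul_left
      (anorm (Set.Icc a b) S h).toReal) fun p ↦ ?_
    rw [norm_mul, norm_pow, ← Complex.ofReal_sub, Complex.norm_real, Real.norm_eq_abs, mul_pow,
      ← mul_assoc]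
    gcongr
    exact norm_coeff_taylorPowerSeries_le hS hN ht p
  have hlim : Filter.Tendsto (fun n ↦ taylorWithinEval h n (Set.Icc a b) t x) Filter.atTop
      (nhds (h x)) := by
    rw [tendsto_iff_norm_sub_tendsto_zero]
    have h0 := ((tendsto_self_mul_const_pow_of_lt_one hq0 hxt).comp
      (Filter.tendsto_add_atTop_nat 1)).const_mul (anorm (Set.Icc a b) S h).toReal
    rw [mul_zero] at h0
    refine squeeze_zero (fun _ ↦ norm_nonneg _) (fun n ↦ ?_) h0
    rw [norm_sub_rev]
    exact norm_sub_taylorWithinEval_le hab hh hS hN ht hx n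
  refine tendsto_nhds_unique ?_ hlim
  refine (hsum.hasSum.tendsto_sum_nat.comp (Filter.tendsto_add_atTop_nat 1)).congr fun n ↦ ?_
  rw [taylor_within_apply]
  refine Finset.sum_congr rfl fun p _ ↦ ?_
  rw [coeff_taylorPowerSeries, Complex.real_smul]
  push_cast
  ring

/-- Lagrange inversion on a segment. -/
theorem hasSum_lagrange (hab : a < b) (hR : 0 < R) (hS : 0 < S)
    (hu : ContDiffOn ℝ (⊤ : ℕ∞) u (Set.Icc a b)) (hg : ContDiffOn ℝ (⊤ : ℕ∞) g (Set.Icc a b))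
    (hNu : anorm (Set.Icc a b) R u ≠ ⊤) (hNg : anorm (Set.Icc a b) S g ≠ ⊤)
    (hRT : 2 * R ≤ T) (hST : 4 * S ≤ T)
    (hz : ‖z‖ < 1 / (4 * (anorm (Set.Icc a b) R u).toReal * T))
    (ht : t ∈ Set.Icc a b) (hx : x ∈ Set.Icc a b)
    (hxt : (x : ℂ) = t + z * Lser (Set.Icc a b) u u z t) :
    HasSum (fun n : ℕ ↦ z ^ n / (n ! : ℂ) * lag (Set.Icc a b) u g n t) (g x) := by
  have hJ := uniqueDiffOn_Icc hab
  have hT : 0 < T := by linarith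
  have hN : 0 < 4 * (anorm (Set.Icc a b) R u).toReal * T :=
    one_div_pos.1 ((norm_nonneg z).trans_lt hz)
  have hzT : 4 * (anorm (Set.Icc a b) R u).toReal * ‖z‖ * T ≤ 1 := by
    rw [lt_div_iff₀ hN] at hz
    linarith
  have hU := norm_coeff_taylorPowerSeries_le hR hNu ht
  have hG := norm_coeff_taylorPowerSeries_le hS hNg ht
  have hW : ∑' n, z ^ n * lagrangeCoeff (taylorPowerSeries (Set.Icc a b) t u) n X =
      (x : ℂ) - t := by
    have hsX := (hasSum_lagrangeTerm_X_pow hU hR.le hRT hT hzT 1).summable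
    rw [pow_one] at hsX
    rw [hsX.tsum_eq_zero_add, hxt, Lser, ← tsum_mul_left]
    simp only [lag_div_factorial hJ ht hu hu, lagrangeCoeff_X_succ]
    simp [lagrangeCoeff_zero, pow_succ', mul_assoc]
  have hnorm := norm_tsum_lagrangeTerm_X_le hU hR.le hRT hT hzT
  have hsum := hasSum_lagrangeTerm hU hR.le hG hS.le hRT hST hT hzT
  rw [hW, ← Complex.ofReal_sub, Complex.norm_real, Real.norm_eq_abs, le_div_iff₀ hT] at hnorm
  have hlt : S * |x - t| < 1 := by nlinarith [abs_nonneg (x - t)]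
  rw [hW, tsum_coeff_taylorPowerSeries hab hg hS hNg ht hx hlt] at hsum
  simpa only [lag_div_factorial hJ ht hu hg] using hsum

end Taylor

theorem stmt19 (a b : ℝ) (hab : a < b) (J : Set ℝ) (hJ : J = Set.Icc a b)
    (R S : ℝ) (hR : 0 < R) (hS : 0 < S)
    (u g : ℝ → ℂ) (hu : ContDiffOn ℝ (⊤ : ℕ∞) u J) (hg : ContDiffOn ℝ (⊤ : ℕ∞) g J)
    (hNu : anorm J R u ≠ ⊤) (hNg : anorm J S g ≠ ⊤)
    (T : ℝ) (hT : T = 2 * max R (2 * S)) :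
    (∀ t ∈ J, ∀ z : ℂ, ‖z‖ < 1 / (4 * (anorm J R u).toReal * T) →
      ∀ x : ℝ, x ∈ J → (x : ℂ) = (t : ℂ) + z * Lser J u u z t →
        Lser J u g z t = g x) ∧
    (∀ t ∈ J, ∀ z : ℝ, |z| < 1 / (16 * (anorm J R u).toReal * R) →
      ∀ x : ℝ, x ∈ J → (x : ℂ) = (t : ℂ) + (z : ℂ) * Lser J u u z t →
        (t : ℂ) + (z : ℂ) * u x = (x : ℂ)) ∧
    (∀ t ∈ J, ∀ z : ℝ, |z| < 1 / (8 * (anorm J R u).toReal * T) →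
      ∀ x : ℝ, x ∈ J → (x : ℂ) = (t : ℂ) + (z : ℂ) * Lser J u u z t →
        g x = g t + ∑' n : ℕ, (z : ℂ) ^ (n + 1) / ((n + 1)! : ℂ) * lag J u g (n + 1) t) := by
  subst hJ
  have hRT : 2 * R ≤ T := by linarith [le_max_left R (2 * S)]
  have hST : 4 * S ≤ T := by linarith [le_max_right R (2 * S)]
  refine ⟨fun t ht z hz x hx hxt ↦ ?_, fun t ht z hz x hx hxt ↦ ?_, fun t ht z hz x hx hxt ↦ ?_⟩
  · exact (hasSum_lagrange hab hR hS hu hg hNu hNg hRT hST hz ht hx hxt).tsum_eq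
  · have hz' : ‖(z : ℂ)‖ < 1 / (4 * (anorm (Set.Icc a b) R u).toReal * (4 * R)) := by
      rw [Complex.norm_real, Real.norm_eq_abs]
      convert hz using 2
      ring
    have h := (hasSum_lagrange hab hR hR hu hu hNu hNu (by linarith) le_rfl hz' ht hx hxt).tsum_eq
    rw [← h, hxt, Lser]
  · have hN : 0 < 8 * (anorm (Set.Icc a b) R u).toReal * T :=
      one_div_pos.1 ((abs_nonneg z).trans_lt hz)
    have hz' : ‖(z : ℂ)‖ < 1 / (4 * (anorm (Set.Icc a b) R u).toReal * T) := by
      rw [Complex.norm_real, Real.norm_eq_abs]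
      exact hz.trans_le (one_div_le_one_div_of_le (by linarith) (by linarith))
    have h := hasSum_lagrange hab hR hS hu hg hNu hNg hRT hST hz' ht hx hxt
    rw [← h.tsum_eq, h.summable.tsum_eq_zero_add]
    simp [lag]
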